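/- arXiv:2507.07606 — 2 statements merged into one kernel-verified Lean document; each statement's English description precedes it below -/
import Mathlib

section
/- A permutation is separable (i.e., obtainable from the trivial one-element permutation by iterated direct sums and skew sums) if and only if it does not contain the permutations 1302 and 2031 as sub-patterns (i.e., no 4 positions i<j<k<l in the permutation realize the relative order pattern of 1302 or of 2031). -/
/-- `t` is a sub-pattern of the permutation (given as the list of its values) `l`:
some increasing choice of positions in `l` realizes the relative order of `t`. -/
def SubPattern (t l : List ℕ) : Prop :=
  ∃ s : Fin t.length → Fin l.length, StrictMono s ∧
    ∀ a b : Fin t.length, l.get (s a) < l.get (s b) ↔ t.get a < t.get b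

/-- Separable permutations: obtained from the trivial one-element permutation by
iterated direct sums and skew sums. -/
inductive SeparablePerm : List ℕ → Prop
  | trivial : SeparablePerm [0]
  | directSum {l₁ l₂ : List ℕ} : SeparablePerm l₁ → SeparablePerm l₂ →
      SeparablePerm (l₁ ++ l₂.map (· + l₁.length))
  | skewSum {l₁ l₂ : List ℕ} : SeparablePerm l₁ → SeparablePerm l₂ →
      SeparablePerm (l₁.map (· + l₂.length) ++ l₂)

/-!
The two patterns are the permutations of size 4 that are neither a direct nor a skew sum. Since
subpatterns of separable permutations are separable, no separable permutation contains them.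

Conversely, an avoider of size at least 2 is shown to be a direct or a skew sum by adding one entry
`a` in front of a list `A ++ B` with `A < B`. Avoiding `2031` forces the entries of `B` below `a` to
precede those above `a`: if `c` came before `d` in `B` with `c > a > d`, then `a`, any entry of `A`,
`c` and `d` would form that pattern. Hence `B = L ++ U` with `L < a < U`. If `U` is nonempty, then
`a :: (A ++ L)` lies below `U`; otherwise `B`, and therefore `A`, lies below `a`. The case `A > B`
follows by reversing the order.
-/

theorem sublist_append_cases {α : Type*} {l A B : List α} (h : l.Sublist (A ++ B)) :
    l.Sublist A ∨ l.Sublist B ∨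
      ∃ u v, l = u ++ v ∧ u ≠ [] ∧ v ≠ [] ∧ u.Sublist A ∧ v.Sublist B := by
  obtain ⟨u, v, rfl, hu, hv⟩ := List.sublist_append_iff.1 h
  rcases eq_or_ne u [] with rfl | hu0
  · exact .inr (.inl hv)
  rcases eq_or_ne v [] with rfl | hv0
  · exact .inl (by rwa [List.append_nil])
  · exact .inr (.inr ⟨u, v, rfl, hu0, hv0, hu, hv⟩)

theorem exists_append_of_pairwise_imp {α : Type*} {p : α → Prop} {l : List α}
    (h : l.Pairwise fun c d => p d → p c) :
    ∃ A B, l = A ++ B ∧ (∀ a ∈ A, p a) ∧ ∀ b ∈ B, ¬ p b := by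
  induction l with
  | nil => exact ⟨[], [], by simp⟩
  | cons c t ih =>
    obtain ⟨hc, ht⟩ := List.pairwise_cons.1 h
    by_cases hpc : p c
    · obtain ⟨A, B, rfl, hA, hB⟩ := ih ht
      exact ⟨c :: A, B, rfl, by simpa using ⟨hpc, hA⟩, hB⟩
    · exact ⟨[], c :: t, rfl, by simp, by simpa using ⟨hpc, fun d hd => mt (hc d hd) hpc⟩⟩

theorem perm_and_perm_of_append_perm_append {α : Type*} [LinearOrder α] {A B C D : List α}
    (h : (A ++ B).Perm (C ++ D)) (hlen : A.length = C.length) (hAB : ∀ a ∈ A, ∀ b ∈ B, a ≤ b)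
    (hCD : (C ++ D).SortedLE) : A.Perm C ∧ B.Perm D := by
  have hsort : (A.mergeSort ++ B.mergeSort).SortedLE := by
    refine List.Pairwise.sortedLE (List.pairwise_append.2
      ⟨List.pairwise_mergeSort' _ A, List.pairwise_mergeSort' _ B, ?_⟩)
    simpa using hAB
  have heq : A.mergeSort ++ B.mergeSort = C ++ D :=
    (((A.mergeSort_perm _).append (B.mergeSort_perm _)).trans h).eq_of_sortedLE hsort hCD
  obtain ⟨rfl, rfl⟩ := List.append_inj heq (by simpa using hlen)
  exact ⟨(A.mergeSort_perm _).symm, (B.mergeSort_perm _).symm⟩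

theorem perm_range'_of_append_perm_range' {A B : List ℕ} {k : ℕ}
    (h : (A ++ B).Perm (List.range' k (A ++ B).length)) (hAB : ∀ a ∈ A, ∀ b ∈ B, a ≤ b) :
    A.Perm (List.range' k A.length) ∧ B.Perm (List.range' (k + A.length) B.length) := by
  rw [List.length_append, ← List.range'_append_1] at h
  refine perm_and_perm_of_append_perm_append h (by simp) hAB ?_
  rw [List.range'_append_1]
  exact List.pairwise_le_range'.sortedLE

theorem map_sub_eq_map_add_map_sub {l : List ℕ} {k m : ℕ} (h : ∀ x ∈ l, k + m ≤ x) :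
    l.map (· - k) = (l.map (· - (k + m))).map (· + m) := by
  rw [List.map_map]
  refine List.map_congr_left fun x hx => ?_
  have := h x hx
  simp only [Function.comp_apply]
  omega

/-- The entries `w, x, y, z` occur in `l` in this order with `y < w < z < x` for the relation `r`.
For `r = (· < ·)` this is containment of the pattern `1302`; reversing the order turns `1302` into
`2031`, so containment of the latter is `Contains1302 (Function.swap (· < ·)) l`. -/
def Contains1302 {α : Type*} (r : α → α → Prop) (l : List α) : Prop :=
  ∃ w x y z, [w, x, y, z].Sublist l ∧ r y w ∧ r w z ∧ r z x

/-- `l` decomposes into two nonempty consecutive blocks, every entry of the first being `r`-below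
every entry of the second: a direct sum decomposition for `r = (· < ·)`, a skew sum decomposition
for the reversed relation. -/
def Splits {α : Type*} (r : α → α → Prop) (l : List α) : Prop :=
  ∃ A B, A ≠ [] ∧ B ≠ [] ∧ l = A ++ B ∧ ∀ a ∈ A, ∀ b ∈ B, r a b

/-- Separability of a list over an arbitrary ordered type: only the relative order of the entries
matters, so that, unlike for `SeparablePerm`, consecutive blocks need not be renumbered. -/
inductive SeparableList {α : Type*} (r : α → α → Prop) : List α → Prop
  | singleton (a : α) : SeparableList r [a]
  | direct {A B : List α} : SeparableList r A → SeparableList r B → (∀ a ∈ A, ∀ b ∈ B, r a b) →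
      SeparableList r (A ++ B)
  | skew {A B : List α} : SeparableList r A → SeparableList r B → (∀ a ∈ A, ∀ b ∈ B, r b a) →
      SeparableList r (A ++ B)

section Relation

variable {α : Type*} {r : α → α → Prop}

theorem Contains1302.mono {l l' : List α} (h : Contains1302 r l) (hl : l.Sublist l') :
    Contains1302 r l' := by
  obtain ⟨w, x, y, z, hs, hr⟩ := h
  exact ⟨w, x, y, z, hs.trans hl, hr⟩

namespace SeparableList

theorem ne_nil {l : List α} (h : SeparableList r l) : l ≠ [] := by
  induction h <;> simp [*]

theorem splits_or_splits_swap {l : List α} (h : SeparableList r l) (hlen : 2 ≤ l.length) :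
    Splits r l ∨ Splits (Function.swap r) l := by
  cases h with
  | singleton => simp at hlen
  | direct hA hB hAB => exact .inl ⟨_, _, hA.ne_nil, hB.ne_nil, rfl, hAB⟩
  | skew hA hB hAB => exact .inr ⟨_, _, hA.ne_nil, hB.ne_nil, rfl, hAB⟩

theorem sublist {u l : List α} (h : SeparableList r l) (hu : u.Sublist l) (hne : u ≠ []) :
    SeparableList r u := by
  induction h generalizing u with
  | singleton a =>
    obtain rfl := (List.sublist_singleton.1 hu).resolve_left hne
    exact .singleton a
  | direct _ _ hAB ihA ihB =>
    rcases sublist_append_cases hu with hu | hv | ⟨u, v, rfl, hu0, hv0, hu, hv⟩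
    · exact ihA hu hne
    · exact ihB hv hne
    · exact .direct (ihA hu hu0) (ihB hv hv0) fun a ha b hb => hAB a (hu.subset ha) b (hv.subset hb)
  | skew _ _ hAB ihA ihB =>
    rcases sublist_append_cases hu with hu | hv | ⟨u, v, rfl, hu0, hv0, hu, hv⟩
    · exact ihA hu hne
    · exact ihB hv hne
    · exact .skew (ihA hu hu0) (ihB hv hv0) fun a ha b hb => hAB a (hu.subset ha) b (hv.subset hb)

theorem swap {l : List α} (h : SeparableList r l) : SeparableList (Function.swap r) l := by
  induction h with
  | singleton a => exact .singleton a
  | direct _ _ hAB ihA ihB => exact .skew ihA ihB hAB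
  | skew _ _ hAB ihA ihB => exact .direct ihA ihB hAB

theorem map {β : Type*} {s : β → β → Prop} {f : α → β} (hf : ∀ a b, r a b → s (f a) (f b))
    {l : List α} (h : SeparableList r l) : SeparableList s (l.map f) := by
  induction h with
  | singleton a => exact .singleton (f a)
  | direct _ _ hAB ihA ihB =>
    rw [List.map_append]
    exact .direct ihA ihB (by simpa using fun a ha b hb => hf a b (hAB a ha b hb))
  | skew _ _ hAB ihA ihB =>
    rw [List.map_append]
    exact .skew ihA ihB (by simpa using fun a ha b hb => hf b a (hAB a ha b hb))

end SeparableList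

theorem not_splits_four_of_inversions [Std.Asymm r] {w x y z : α} (hyw : r y w)
    (hzx : r z x) : ¬ Splits r [w, x, y, z] := by
  rintro ⟨A, B, hA, hB, h, hAB⟩
  have cut : w ∈ A ∧ y ∈ B ∨ x ∈ A ∧ z ∈ B := by
    simp only [List.cons_eq_append_iff, List.nil_eq_append_iff] at h
    grind
  rcases cut with ⟨hw, hy⟩ | ⟨hx, hz⟩
  · exact asymm hyw (hAB w hw y hy)
  · exact asymm hzx (hAB x hx z hz)

theorem not_splits_swap_four [Std.Asymm r] {w x y z : α} (hwz : r w z) :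
    ¬ Splits (Function.swap r) [w, x, y, z] := by
  rintro ⟨A, B, hA, hB, h, hAB⟩
  have cut : w ∈ A ∧ z ∈ B := by
    simp only [List.cons_eq_append_iff, List.nil_eq_append_iff] at h
    grind
  exact asymm hwz (hAB w cut.1 z cut.2)

theorem SeparableList.not_contains1302 [Std.Asymm r] {l : List α} (h : SeparableList r l) :
    ¬ Contains1302 r l := by
  rintro ⟨w, x, y, z, hs, hyw, hwz, hzx⟩
  rcases (h.sublist hs (by simp)).splits_or_splits_swap (by simp) with h | h
  · exact not_splits_four_of_inversions hyw hzx h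
  · exact not_splits_swap_four hwz h

theorem Splits.cons [IsTrans α r] [Std.Trichotomous r] {a : α} {l : List α} (ha : a ∉ l)
    (hpat : ¬ Contains1302 (Function.swap r) (a :: l)) (hl : Splits r l) :
    Splits r (a :: l) ∨ Splits (Function.swap r) (a :: l) := by
  obtain ⟨A, B, hA, hB, rfl, hAB⟩ := hl
  have above_of_not_below : ∀ c ∈ A ++ B, ¬ r c a → r a c := fun c hc hca =>
    (trichotomous_of r a c).resolve_right (not_or.2 ⟨(ha <| · ▸ hc), hca⟩)
  obtain ⟨x, hx⟩ := List.exists_mem_of_ne_nil A hA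
  have below_before_above : B.Pairwise fun c d => r d a → r c a := by
    refine List.pairwise_iff_forall_sublist.2 fun {c d} hcd hda => ?_
    by_contra hca
    have hc : c ∈ B := hcd.subset (by simp)
    have hd : d ∈ B := hcd.subset (by simp)
    exact hpat ⟨a, x, c, d, ((List.singleton_sublist.2 hx).append hcd).cons_cons a,
      above_of_not_below c (List.mem_append_right A hc) hca, hda, hAB x hx d hd⟩
  obtain ⟨L, U, rfl, hL, hU⟩ := exists_append_of_pairwise_imp below_before_above
  have haU : ∀ u ∈ U, r a u := fun u hu => above_of_not_below u (by simp [hu]) (hU u hu)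
  rcases eq_or_ne U [] with rfl | hU0
  · obtain ⟨b, hb⟩ := List.exists_mem_of_ne_nil _ hB
    have hAa : ∀ c ∈ A, r c a := fun c hc => _root_.trans (hAB c hc b hb) (hL b (by simpa using hb))
    refine .inr ⟨[a], A ++ (L ++ []), by simp, by simp [hA], rfl, ?_⟩
    simp only [List.mem_singleton, List.append_nil, List.mem_append, forall_eq]
    exact fun c hc => hc.elim (hAa c) (hL c)
  · refine .inl ⟨a :: (A ++ L), U, by simp, hU0, by simp, fun c hc u hu => ?_⟩
    rcases List.mem_cons.1 hc with rfl | hc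
    · exact haU u hu
    rcases List.mem_append.1 hc with hc | hc
    · exact hAB c hc u (List.mem_append_right L hu)
    · exact _root_.trans (hL c hc) (haU u hu)

theorem splits_or_splits_swap [IsTrans α r] [Std.Trichotomous r] {l : List α}
    (hlen : 2 ≤ l.length) (hnd : l.Nodup) (h1302 : ¬ Contains1302 r l)
    (h2031 : ¬ Contains1302 (Function.swap r) l) :
    Splits r l ∨ Splits (Function.swap r) l := by
  induction l with
  | nil => simp at hlen
  | cons a t ih =>
    obtain ⟨ha, hnd⟩ := List.nodup_cons.1 hnd
    match t with
    | [] => simp at hlen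
    | [b] =>
      rcases trichotomous_of r a b with h | rfl | h
      · exact .inl ⟨[a], [b], by simp, by simp, rfl, by simpa using h⟩
      · simp at ha
      · exact .inr ⟨[a], [b], by simp, by simp, rfl, by simpa using h⟩
    | b :: c :: t =>
      have tail_sub := List.sublist_cons_self a (b :: c :: t)
      rcases ih (by simp) hnd (mt (·.mono tail_sub) h1302) (mt (·.mono tail_sub) h2031)
        with h | h
      · exact h.cons ha h2031
      · exact (h.cons ha h1302).symm

theorem separableList_of_not_contains1302 [IsTrans α r] [Std.Trichotomous r] {l : List α}
    (hne : l ≠ []) (hnd : l.Nodup) (h1302 : ¬ Contains1302 r l)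
    (h2031 : ¬ Contains1302 (Function.swap r) l) : SeparableList r l := by
  induction hn : l.length using Nat.strong_induction_on generalizing l with
  | _ n ih =>
    subst hn
    have of_blocks {A B : List α} (hl : l = A ++ B) (hA : A ≠ []) (hB : B ≠ []) :
        SeparableList r A ∧ SeparableList r B := by
      have of_shorter_sublist {l' : List α} (hs : l'.Sublist l) (hlt : l'.length < l.length)
          (hne' : l' ≠ []) : SeparableList r l' :=
        ih _ hlt hne' (hnd.sublist hs) (mt (·.mono hs) h1302) (mt (·.mono hs) h2031) rfl
      have := List.length_pos_iff.2 hA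
      have := List.length_pos_iff.2 hB
      subst hl
      exact ⟨of_shorter_sublist (List.sublist_append_left A B) (by simpa) hA,
        of_shorter_sublist (List.sublist_append_right A B) (by simpa) hB⟩
    by_cases hlen : 2 ≤ l.length
    · rcases splits_or_splits_swap hlen hnd h1302 h2031 with
        ⟨A, B, hA, hB, hl, hAB⟩ | ⟨A, B, hA, hB, hl, hAB⟩
      · exact hl ▸ .direct (of_blocks hl hA hB).1 (of_blocks hl hA hB).2 hAB
      · exact hl ▸ .skew (of_blocks hl hA hB).1 (of_blocks hl hA hB).2 hAB
    · have hpos := List.length_pos_iff.2 hne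
      obtain ⟨a, rfl⟩ := List.length_eq_one_iff.1 (show l.length = 1 by omega)
      exact .singleton a

theorem separableList_iff_not_contains1302 [IsStrictTotalOrder α r] {l : List α} (hne : l ≠ [])
    (hnd : l.Nodup) :
    SeparableList r l ↔ ¬ Contains1302 r l ∧ ¬ Contains1302 (Function.swap r) l :=
  ⟨fun h => ⟨h.not_contains1302, h.swap.not_contains1302⟩,
    fun ⟨h1302, h2031⟩ => separableList_of_not_contains1302 hne hnd h1302 h2031⟩

end Relation

theorem SeparablePerm.perm_range {l : List ℕ} (h : SeparablePerm l) :
    l.Perm (List.range l.length) := by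
  have append_map_perm {l₁ l₂ : List ℕ} (h₁ : l₁.Perm (List.range l₁.length))
      (h₂ : l₂.Perm (List.range l₂.length)) :
      (l₁ ++ l₂.map (· + l₁.length)).Perm (List.range (l₁.length + l₂.length)) := by
    simpa only [List.range_add, Nat.add_comm] using h₁.append (h₂.map (· + l₁.length))
  induction h with
  | trivial => simp
  | directSum _ _ ih₁ ih₂ => simpa using append_map_perm ih₁ ih₂
  | skewSum _ _ ih₁ ih₂ =>
    simpa [Nat.add_comm] using List.perm_append_comm.trans (append_map_perm ih₂ ih₁)

theorem SeparablePerm.lt_length {l : List ℕ} (h : SeparablePerm l) {x : ℕ} (hx : x ∈ l) :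
    x < l.length :=
  List.mem_range.1 (h.perm_range.subset hx)

theorem SeparablePerm.separableList {l : List ℕ} (h : SeparablePerm l) :
    SeparableList (· < ·) l := by
  induction h with
  | trivial => exact .singleton 0
  | directSum h₁ _ ih₁ ih₂ =>
    refine .direct ih₁ (ih₂.map (by simp)) fun a ha b hb => ?_
    obtain ⟨c, -, rfl⟩ := List.mem_map.1 hb
    exact Nat.lt_add_left c (h₁.lt_length ha)
  | skewSum _ h₂ ih₁ ih₂ =>
    refine .skew (ih₁.map (by simp)) ih₂ fun a ha b hb => ?_
    obtain ⟨c, -, rfl⟩ := List.mem_map.1 ha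
    exact Nat.lt_add_left c (h₂.lt_length hb)

/- The offset `k` is there for the induction: one of the two blocks of a sum is a permutation of an
interval that does not start at `0`. No entry of `l` is below `k`, so `· - k` does not truncate. -/
theorem SeparableList.separablePerm_map_sub {l : List ℕ} (h : SeparableList (· < ·) l) {k : ℕ}
    (hperm : l.Perm (List.range' k l.length)) : SeparablePerm (l.map (· - k)) := by
  induction h generalizing k with
  | singleton a =>
    obtain rfl : a = k := by simpa using hperm
    simpa using SeparablePerm.trivial
  | @direct A B _ _ hAB ihA ihB =>
    obtain ⟨hA, hB⟩ := perm_range'_of_append_perm_range' hperm fun a ha b hb => (hAB a ha b hb).le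
    have hkB : ∀ b ∈ B, k + A.length ≤ b := fun b hb => (List.mem_range'_1.1 (hB.subset hb)).1
    rw [List.map_append, map_sub_eq_map_add_map_sub hkB]
    simpa using (ihA hA).directSum (ihB hB)
  | @skew A B _ _ hAB ihA ihB =>
    have hperm' : (B ++ A).Perm (List.range' k (B ++ A).length) := by
      simpa only [List.length_append, Nat.add_comm] using List.perm_append_comm.trans hperm
    obtain ⟨hB, hA⟩ := perm_range'_of_append_perm_range' hperm' fun b hb a ha => (hAB a ha b hb).le
    have hkA : ∀ a ∈ A, k + B.length ≤ a := fun a ha => (List.mem_range'_1.1 (hA.subset ha)).1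
    rw [List.map_append, map_sub_eq_map_add_map_sub hkA]
    simpa using (ihA hA).skewSum (ihB hB)

theorem separablePerm_iff_separableList {l : List ℕ} (hperm : l.Perm (List.range l.length)) :
    SeparablePerm l ↔ SeparableList (· < ·) l := by
  refine ⟨SeparablePerm.separableList, fun h => ?_⟩
  simpa using h.separablePerm_map_sub (k := 0) (by rwa [← List.range_eq_range'])

theorem subPattern_iff_exists_ofFn_sublist {t l : List ℕ} :
    SubPattern t l ↔ ∃ v : Fin t.length → ℕ, (List.ofFn v).Sublist l ∧
      ∀ a b, v a < v b ↔ t.get a < t.get b := by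
  simp only [List.sublist_iff_exists_fin_orderEmbedding_get_eq]
  constructor
  · rintro ⟨s, hs, h⟩
    let e := (Fin.castOrderIso (List.length_ofFn (f := l.get ∘ s))).toOrderEmbedding
    exact ⟨l.get ∘ s, ⟨e.trans (OrderEmbedding.ofStrictMono s hs), List.get_ofFn _⟩, h⟩
  · rintro ⟨v, ⟨f, hf⟩, h⟩
    let e := (Fin.castOrderIso (List.length_ofFn (f := v))).symm
    refine ⟨f ∘ e, f.strictMono.comp e.strictMono, fun a b => ?_⟩
    simp only [Function.comp_apply, ← hf, ← h, List.get_ofFn]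
    rfl

theorem subPattern_1302_iff {l : List ℕ} :
    SubPattern [1, 3, 0, 2] l ↔ Contains1302 (· < ·) l := by
  rw [subPattern_iff_exists_ofFn_sublist]
  constructor
  · rintro ⟨v, hv, h⟩
    exact ⟨v 0, v 1, v 2, v 3, by simpa [List.ofFn_succ] using hv, (h 2 0).2 (by simp),
      (h 0 3).2 (by simp), (h 3 1).2 (by simp)⟩
  · rintro ⟨w, x, y, z, hs, hyw, hwz, hzx⟩
    refine ⟨![w, x, y, z], by simpa [List.ofFn_succ] using hs, ?_⟩
    have hyz := hyw.trans hwz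
    have hwx := hwz.trans hzx
    have hyx := hyz.trans hzx
    simp [*, Fin.forall_fin_succ, le_of_lt]

theorem subPattern_2031_iff {l : List ℕ} :
    SubPattern [2, 0, 3, 1] l ↔ Contains1302 (Function.swap (· < ·)) l := by
  rw [subPattern_iff_exists_ofFn_sublist]
  constructor
  · rintro ⟨v, hv, h⟩
    exact ⟨v 0, v 1, v 2, v 3, by simpa [List.ofFn_succ] using hv, (h 0 2).2 (by simp),
      (h 3 0).2 (by simp), (h 1 3).2 (by simp)⟩
  · rintro ⟨w, x, y, z, hs, (hwy : w < y), (hzw : z < w), (hxz : x < z)⟩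
    refine ⟨![w, x, y, z], by simpa [List.ofFn_succ] using hs, ?_⟩
    have hzy := hzw.trans hwy
    have hxw := hxz.trans hzw
    have hxy := hxw.trans hwy
    simp [*, Fin.forall_fin_succ, le_of_lt]

theorem separable_iff_avoids_1302_and_2031 (l : List ℕ) (hne : l ≠ [])
    (hperm : l.Perm (List.range l.length)) :
    SeparablePerm l ↔ ¬ SubPattern [1, 3, 0, 2] l ∧ ¬ SubPattern [2, 0, 3, 1] l := by
  have hnd : l.Nodup := hperm.nodup_iff.2 List.nodup_range
  rw [separablePerm_iff_separableList hperm, separableList_iff_not_contains1302 hne hnd,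
    subPattern_1302_iff, subPattern_2031_iff]
end

section
/- There exists a computable linear order L = (ℕ, <_L) of order type ω + ω* that avoids the permutations 1302 and 2031, such that no infinite L-ascending or L-descending sequence is computable from L (equivalently, computable). -/
/-- `r` (as a boolean relation) is a strict linear order on ℕ. -/
def IsLinearRel (r : ℕ → ℕ → Bool) : Prop :=
  (∀ x, r x x = false) ∧
  (∀ x y z, r x y = true → r y z = true → r x z = true) ∧
  (∀ x y, x ≠ y → r x y = true ∨ r y x = true)

/-- The order has type `ω + ω*`. -/
def OrderTypeOmegaPlusOmegaStar (r : ℕ → ℕ → Bool) : Prop :=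
  (∀ x, {y | r y x = true}.Finite ∨ {y | r x y = true}.Finite) ∧
  {x | {y | r y x = true}.Finite}.Infinite ∧
  {x | {y | r x y = true}.Finite}.Infinite

/-- Some increasing tuple of naturals realizes in the order `r` the relative order of the
permutation `t`. -/
def LRealizes (r : ℕ → ℕ → Bool) (t : List ℕ) : Prop :=
  ∃ s : Fin t.length → ℕ, StrictMono s ∧
    ∀ i j : Fin t.length, i < j → (r (s i) (s j) = true ↔ t.get i < t.get j)

/-!
Label the naturals by `a : ℕ → ℕ` and, for `x < y`, put `y` above `x` exactly when the minimum of
`a` on `(x, y]` is even. Whatever `a` is, this is a linear order avoiding both permutations, because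
the minimum over a union of two intervals is one of the two minima; and since the minimum over
`(x, y]` stabilizes as `y → ∞`, almost all numbers lie on the side of `x` given by the parity of the
least label after `x`.

It remains to choose a primitive recursive `a` such that every infinite c.e. set has an element
followed by an even least label and one followed by an odd least label. This is a finite injury
argument: requirement `p` asks that `p` be the least label after some element of the set with index
`p / 2`, and a stage is labelled by the least requirement that needs attention there. A monotone
computable sequence would have an element with infinitely many numbers on the wrong side.
-/

open Filter Set
open Nat.Partrec (Code)

section PrimitiveRecursion

variable {α : Type*} [Primcodable α]

theorem primrecPred_exists_lt {R : α → ℕ → Prop} {n : α → ℕ} (hR : PrimrecRel R)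
    (hn : Primrec n) : PrimrecPred fun i => ∃ u < n i, R i u :=
  have hmem : PrimrecRel fun (l : List ℕ) i => ∃ u ∈ l, R i u := hR.swap.exists_mem_list
  (hmem.comp (Primrec.list_range.comp hn) .id).of_eq fun i => by simp only [List.mem_range, id]

theorem primrecPred_forall_lt {R : α → ℕ → Prop} {n : α → ℕ} (hR : PrimrecRel R)
    (hn : Primrec n) : PrimrecPred fun i => ∀ u < n i, R i u :=
  have hmem : PrimrecRel fun (l : List ℕ) i => ∀ u ∈ l, R i u := hR.swap.forall_mem_list
  (hmem.comp (Primrec.list_range.comp hn) .id).of_eq fun i => by simp only [List.mem_range, id]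

theorem primrecPred_forall_mem_Ioo {R : α → ℕ → Prop} {x n : α → ℕ} (hR : PrimrecRel R)
    (hx : Primrec x) (hn : Primrec n) : PrimrecPred fun i => ∀ u ∈ Ioo (x i) (n i), R i u := by
  have himp : PrimrecRel fun i u => ¬ x i < u ∨ R i u :=
    (Primrec.nat_lt.comp (hx.comp .fst) .snd).not.or hR
  exact (primrecPred_forall_lt himp hn).of_eq fun i => by
    simp only [← imp_iff_not_or, mem_Ioo, and_imp, forall_comm (α := x i < _)]

theorem primrecPred_mem_image_Ioo {b : α → ℕ → ℕ} {x n p : α → ℕ} (hb : Primrec₂ b)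
    (hx : Primrec x) (hn : Primrec n) (hp : Primrec p) :
    PrimrecPred fun i => p i ∈ b i '' Ioo (x i) (n i) := by
  have hvalue : PrimrecRel fun i u => x i < u ∧ b i u = p i :=
    (Primrec.nat_lt.comp (hx.comp .fst) .snd).and (Primrec.eq.comp hb (hp.comp .fst))
  exact (primrecPred_exists_lt hvalue hn).of_eq fun i => by
    simp only [mem_image, mem_Ioo, and_assoc, and_left_comm]

theorem primrecPred_isLeast_image_Ioo {b : α → ℕ → ℕ} {x n p : α → ℕ} (hb : Primrec₂ b)
    (hx : Primrec x) (hn : Primrec n) (hp : Primrec p) :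
    PrimrecPred fun i => IsLeast (b i '' Ioo (x i) (n i)) (p i) := by
  have hle : PrimrecRel fun i u => p i ≤ b i u := Primrec.nat_le.comp (hp.comp .fst) hb
  exact ((primrecPred_mem_image_Ioo hb hx hn hp).and (primrecPred_forall_mem_Ioo hle hx hn)).of_eq
    fun i => by simp only [IsLeast, mem_lowerBounds, forall_mem_image]

theorem primrec_sInf_setOf {P : α → ℕ → Prop} {g : α → ℕ} (hP : PrimrecRel P) (hg : Primrec g)
    (h : ∀ i, P i (g i)) : Primrec fun i => sInf {m | P i m} := by
  have hnot : PrimrecRel fun (q : α × ℕ) k => ¬ P q.1 k :=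
    hP.not.comp (Primrec.fst.comp .fst) .snd
  have hleast : PrimrecRel fun i m => P i m ∧ ∀ k < m, ¬ P i k :=
    hP.and (primrecPred_forall_lt hnot .snd)
  refine .of_graph ⟨g, hg, fun i => Nat.sInf_le (h i)⟩ (hleast.of_eq fun i m => ⟨?_, ?_⟩)
  · rintro ⟨hm, hlt⟩
    exact IsLeast.csInf_eq ⟨hm, fun k hk => not_lt.1 fun hkm => hlt k hkm hk⟩
  · rintro rfl
    exact ⟨Nat.sInf_mem ⟨g i, h i⟩, fun k hk => Nat.notMem_of_lt_sInf hk⟩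

theorem primrecPred_even : PrimrecPred (Even : ℕ → Prop) :=
  (Primrec.eq.comp (Primrec.nat_mod.comp .id (.const 2)) (.const 0)).of_eq fun _ =>
    Nat.even_iff.symm

theorem exists_primrec_courseOfValues [Inhabited α] {F : (ℕ → α) → ℕ → α}
    (hcongr : ∀ a a' n, (∀ u < n, a u = a' u) → F a n = F a' n)
    (hF : Primrec fun l : List α => F (fun u => l.getD u default) l.length) :
    ∃ a, Primrec a ∧ ∀ n, a n = F a n := by
  let a : ℕ → α :=
    Nat.strongRec fun n ih => F (fun u => if h : u < n then ih u h else default) n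
  have ha (n : ℕ) : a n = F a n := by
    simp only [a]
    rw [Nat.strongRec_eq]
    exact hcongr _ _ n fun u hu => by simp only [hu, dif_pos]
  refine ⟨a, ?_, ha⟩
  refine (Primrec.nat_strong_rec (fun _ : Unit => a)
    (Primrec.option_some.comp (hF.comp .snd)).to₂ fun _ n => ?_).comp (.const ()) .id
  rw [List.length_map, List.length_range, ha n]
  exact congrArg some (hcongr _ _ n fun u hu => by simp [hu])

end PrimitiveRecursion

section ParityOrder

variable {a : ℕ → ℕ} {w x y z m : ℕ}

/-- The minimum of `a` on the interval `(x, y]`, with the junk value `0` when `y ≤ x`. -/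
noncomputable def minIoc (a : ℕ → ℕ) (x y : ℕ) : ℕ := sInf (a '' Ioc x y)

theorem minIoc_eq_min (hxy : x < y) (hyz : y < z) :
    minIoc a x z = min (minIoc a x y) (minIoc a y z) := by
  rw [minIoc, ← Ioc_union_Ioc_eq_Ioc hxy.le hyz.le, image_union]
  exact csInf_union (OrderBot.bddBelow _) ((nonempty_Ioc.2 hxy).image a) (OrderBot.bddBelow _)
    ((nonempty_Ioc.2 hyz).image a)

theorem eventually_minIoc_eq (hm : IsLeast (a '' Ioi x) m) : ∀ᶠ y in atTop, minIoc a x y = m := by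
  obtain ⟨⟨u, hxu, rfl⟩, hle⟩ := hm
  filter_upwards [eventually_ge_atTop u] with y huy
  exact IsLeast.csInf_eq ⟨mem_image_of_mem a ⟨hxu, huy⟩,
    lowerBounds_mono_set (image_mono Ioc_subset_Ioi_self) hle⟩

theorem primrec_minIoc (ha : Primrec a) : Primrec₂ (minIoc a) := by
  have hmem : PrimrecRel fun (p : ℕ × ℕ) m => m = a p.2 ∨ m ∈ a '' Ioo p.1 p.2 :=
    (Primrec.eq.comp .snd (ha.comp (Primrec.snd.comp .fst))).or
      (primrecPred_mem_image_Ioo (ha.comp .snd) (Primrec.fst.comp .fst) (Primrec.snd.comp .fst)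
        .snd)
  refine (Primrec.ite (Primrec.nat_lt.comp .fst .snd)
    (primrec_sInf_setOf hmem (ha.comp .snd) fun _ => .inl rfl) (.const 0)).of_eq fun ⟨x, y⟩ => ?_
  dsimp only
  split_ifs with hxy
  · rw [minIoc, ← Ioo_insert_right hxy, image_insert_eq]
    rfl
  · simp [minIoc, hxy]

/-- The order in which, for `x < y` in `ℕ`, the number `y` lies above `x` if the minimum of `a`
on `(x, y]` is even and below `x` if it is odd. -/
noncomputable def parityOrder (a : ℕ → ℕ) (x y : ℕ) : Bool :=
  decide (x < y ∧ Even (minIoc a x y) ∨ y < x ∧ Odd (minIoc a y x))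

theorem parityOrder_of_lt (h : x < y) : parityOrder a x y = true ↔ Even (minIoc a x y) := by
  simp [parityOrder, h, h.not_gt]

theorem parityOrder_of_gt (h : y < x) : parityOrder a x y = true ↔ Odd (minIoc a y x) := by
  simp [parityOrder, h, h.not_gt]

theorem parityOrder_swap (h : x ≠ y) : parityOrder a y x = true ↔ ¬ parityOrder a x y = true := by
  rcases h.lt_or_gt with h | h
  · rw [parityOrder_of_lt h, parityOrder_of_gt h, Nat.not_even_iff_odd]
  · rw [parityOrder_of_lt h, parityOrder_of_gt h, Nat.not_odd_iff_even]

theorem parityOrder_congr_left_or_right (hxy : x < y) (hyz : y < z) :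
    (parityOrder a x z = true ↔ parityOrder a x y = true) ∨
      (parityOrder a x z = true ↔ parityOrder a y z = true) := by
  simp only [parityOrder_of_lt, hxy, hyz, hxy.trans hyz, minIoc_eq_min hxy hyz]
  exact (min_choice (minIoc a x y) (minIoc a y z)).imp (fun h => by rw [h]) fun h => by rw [h]

theorem parityOrder_trans (hxy : parityOrder a x y = true) (hyz : parityOrder a y z = true) :
    parityOrder a x z = true := by
  -- In a cycle on naturals `u < v < w`, the pair `u, w` would be ordered unlike `u, v` and `v, w`.
  grind [parityOrder_swap, parityOrder_congr_left_or_right]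

theorem isLinearRel_parityOrder (a : ℕ → ℕ) : IsLinearRel (parityOrder a) :=
  ⟨fun x => by simp [parityOrder], fun _ _ _ => parityOrder_trans, fun x y hxy => by
    rw [parityOrder_swap hxy]; exact em _⟩

theorem parityOrder_congr_of_separated (hwx : w < x) (hxy : x < y) (hyz : y < z)
    (hw : ¬ (parityOrder a w x = true ↔ parityOrder a w y = true))
    (hz : ¬ (parityOrder a x z = true ↔ parityOrder a y z = true)) :
    parityOrder a w z = true ↔ parityOrder a w y = true := by
  have hwy := hwx.trans hxy
  have hxz := hxy.trans hyz
  rw [parityOrder_of_lt hwx, parityOrder_of_lt hwy] at hw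
  rw [parityOrder_of_lt hxz, parityOrder_of_lt hyz] at hz
  have hw' : minIoc a w x ≠ minIoc a w y := fun h => hw (by rw [h])
  have hz' : minIoc a x z ≠ minIoc a y z := fun h => hz (by rw [h])
  have hmin : minIoc a w z = minIoc a w y := by
    rw [minIoc_eq_min hwx hxy] at hw' ⊢
    rw [minIoc_eq_min hxy hyz] at hz'
    rw [minIoc_eq_min hwx hxz, minIoc_eq_min hxy hyz]
    omega
  rw [parityOrder_of_lt (hwx.trans hxz), parityOrder_of_lt hwy, hmin]

theorem not_lRealizes_parityOrder (a : ℕ → ℕ) {t₀ t₁ t₂ t₃ : ℕ} (h₀ : ¬ (t₀ < t₁ ↔ t₀ < t₂))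
    (h₃ : ¬ (t₁ < t₃ ↔ t₂ < t₃)) (h : ¬ (t₀ < t₃ ↔ t₀ < t₂)) :
    ¬ LRealizes (parityOrder a) [t₀, t₁, t₂, t₃] := by
  rintro ⟨s, hs, hiff⟩
  replace hiff : ∀ i j : Fin 4, i < j →
    (parityOrder a (s i) (s j) = true ↔ [t₀, t₁, t₂, t₃].get i < [t₀, t₁, t₂, t₃].get j) := hiff
  have h₀₁ := hiff 0 1 (by decide)
  have h₀₂ := hiff 0 2 (by decide)
  have h₀₃ := hiff 0 3 (by decide)
  have h₁₃ := hiff 1 3 (by decide)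
  have h₂₃ := hiff 2 3 (by decide)
  have hsep := parityOrder_congr_of_separated (a := a) (hs (by decide : (0 : Fin 4) < 1))
    (hs (by decide : (1 : Fin 4) < 2)) (hs (by decide : (2 : Fin 4) < 3))
  rw [h₀₁, h₀₂, h₀₃, h₁₃, h₂₃] at hsep
  exact h (hsep h₀ h₃)

theorem finite_below_parityOrder_of_even (hm : IsLeast (a '' Ioi x) m) (heven : Even m) :
    {y | parityOrder a y x = true}.Finite := by
  have hev : ∀ᶠ y in cofinite, ¬ parityOrder a y x = true := by
    rw [Nat.cofinite_eq_atTop]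
    filter_upwards [eventually_minIoc_eq hm, eventually_gt_atTop x] with y hy hxy
    rwa [parityOrder_of_gt hxy, hy, Nat.not_odd_iff_even]
  simpa only [eventually_cofinite, not_not] using hev

theorem finite_above_parityOrder_of_odd (hm : IsLeast (a '' Ioi x) m) (hodd : Odd m) :
    {y | parityOrder a x y = true}.Finite := by
  have hev : ∀ᶠ y in cofinite, ¬ parityOrder a x y = true := by
    rw [Nat.cofinite_eq_atTop]
    filter_upwards [eventually_minIoc_eq hm, eventually_gt_atTop x] with y hy hxy
    rwa [parityOrder_of_lt hxy, hy, Nat.not_even_iff_odd]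
  simpa only [eventually_cofinite, not_not] using hev

theorem finite_below_or_above_parityOrder (a : ℕ → ℕ) (x : ℕ) :
    {y | parityOrder a y x = true}.Finite ∨ {y | parityOrder a x y = true}.Finite :=
  have hm : IsLeast (a '' Ioi x) (sInf (a '' Ioi x)) := isLeast_csInf (nonempty_Ioi.image a)
  (Nat.even_or_odd _).imp (finite_below_parityOrder_of_even hm) (finite_above_parityOrder_of_odd hm)

theorem primrec_parityOrder (ha : Primrec a) : Primrec₂ (parityOrder a) := by
  have heven : PrimrecRel fun x y => Even (minIoc a x y) :=
    primrecPred_even.comp (primrec_minIoc ha)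
  have hodd : PrimrecRel fun x y => Odd (minIoc a x y) :=
    heven.not.of_eq fun _ _ => Nat.not_even_iff_odd
  have hlt_even : PrimrecRel fun x y => x < y ∧ Even (minIoc a x y) := Primrec.nat_lt.and heven
  have hlt_odd : PrimrecRel fun x y => x < y ∧ Odd (minIoc a x y) := Primrec.nat_lt.and hodd
  exact (hlt_even.or hlt_odd.swap).decide

end ParityOrder

section Priority

variable {W : ℕ → ℕ → ℕ → Prop} {a : ℕ → ℕ} {n p : ℕ}

/-- Requirement `p` asks for an element `x` of the `p`-th set such that `p` is the least label
after `x`. It is met at stage `n` if some element enumerated by then has this property as far as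
the labels before `n` are concerned. Here `W p n x` says that `x` has been enumerated into the
`p`-th set by stage `n`. -/
def IsMet (W : ℕ → ℕ → ℕ → Prop) (a : ℕ → ℕ) (n p : ℕ) : Prop :=
  ∃ x < n, W p n x ∧ IsLeast (a '' Ioo x n) p

/-- Requirement `p` needs attention at stage `n` if it is not met, but labelling `n` with `p` would
meet it. -/
def NeedsAttention (W : ℕ → ℕ → ℕ → Prop) (a : ℕ → ℕ) (n p : ℕ) : Prop :=
  (∃ x < n, W p n x ∧ ∀ u ∈ Ioo x n, p < a u) ∧ ¬ IsMet W a n p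

/-- The least requirement below `n` that needs attention at stage `n`, or `n` if there is none. -/
noncomputable def nextLabel (W : ℕ → ℕ → ℕ → Prop) (a : ℕ → ℕ) (n : ℕ) : ℕ :=
  sInf {p | NeedsAttention W a n p ∨ p = n}

theorem needsAttention_nextLabel (h : nextLabel W a n ≠ n) :
    NeedsAttention W a n (nextLabel W a n) :=
  (Nat.sInf_mem (s := {p | NeedsAttention W a n p ∨ p = n}) ⟨n, .inr rfl⟩).resolve_right h

theorem not_needsAttention_of_lt_nextLabel (h : p < nextLabel W a n) : ¬ NeedsAttention W a n p :=
  fun hp => Nat.notMem_of_lt_sInf h (.inl hp)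

theorem nextLabel_congr {a' : ℕ → ℕ} (h : ∀ u < n, a u = a' u) :
    nextLabel W a n = nextLabel W a' n := by
  have himage (x : ℕ) : a '' Ioo x n = a' '' Ioo x n := image_congr fun u hu => h u hu.2
  have hforall (x p : ℕ) : (∀ u ∈ Ioo x n, p < a u) ↔ ∀ u ∈ Ioo x n, p < a' u :=
    forall₂_congr fun u hu => by rw [h u hu.2]
  simp only [nextLabel, NeedsAttention, IsMet, himage, hforall]

section Computability

variable (hW : PrimrecPred fun q : ℕ × ℕ × ℕ => W q.1 q.2.1 q.2.2)
include hW

theorem primrecRel_isMet :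
    PrimrecRel fun (l : List ℕ) p => IsMet W (fun u => l.getD u default) l.length p := by
  have hn : Primrec fun q : (List ℕ × ℕ) × ℕ => q.1.1.length :=
    Primrec.list_length.comp (Primrec.fst.comp .fst)
  have hp : Primrec fun q : (List ℕ × ℕ) × ℕ => q.1.2 := Primrec.snd.comp .fst
  have hlabel : Primrec₂ fun (q : (List ℕ × ℕ) × ℕ) u => q.1.1.getD u default :=
    (Primrec.list_getD default).comp (Primrec.fst.comp (Primrec.fst.comp .fst)) .snd
  have hcandidate : PrimrecRel fun (q : List ℕ × ℕ) x => W q.2 q.1.length x ∧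
      IsLeast ((fun u => q.1.getD u default) '' Ioo x q.1.length) q.2 :=
    (hW.comp (hp.pair (hn.pair .snd))).and (primrecPred_isLeast_image_Ioo hlabel .snd hn hp)
  exact primrecPred_exists_lt hcandidate (Primrec.list_length.comp .fst)

theorem primrecRel_needsAttention :
    PrimrecRel fun (l : List ℕ) p => NeedsAttention W (fun u => l.getD u default) l.length p := by
  have hn : Primrec fun q : (List ℕ × ℕ) × ℕ => q.1.1.length :=
    Primrec.list_length.comp (Primrec.fst.comp .fst)
  have hp : Primrec fun q : (List ℕ × ℕ) × ℕ => q.1.2 := Primrec.snd.comp .fst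
  have hlt : PrimrecRel fun (q : (List ℕ × ℕ) × ℕ) u => q.1.2 < q.1.1.getD u default :=
    Primrec.nat_lt.comp (hp.comp .fst)
      ((Primrec.list_getD default).comp (Primrec.fst.comp (Primrec.fst.comp .fst)) .snd)
  have hcandidate : PrimrecRel fun (q : List ℕ × ℕ) x => W q.2 q.1.length x ∧
      ∀ u ∈ Ioo x q.1.length, q.2 < q.1.getD u default :=
    (hW.comp (hp.pair (hn.pair .snd))).and (primrecPred_forall_mem_Ioo hlt .snd hn)
  exact (primrecPred_exists_lt hcandidate (Primrec.list_length.comp .fst)).and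
    (primrecRel_isMet hW).not

theorem exists_primrec_eq_nextLabel : ∃ a, Primrec a ∧ ∀ n, a n = nextLabel W a n :=
  exists_primrec_courseOfValues (fun _ _ _ => nextLabel_congr) <|
    primrec_sInf_setOf ((primrecRel_needsAttention hW).or
      (Primrec.eq.comp .snd (Primrec.list_length.comp .fst))) .list_length fun _ => .inr rfl

end Computability

theorem tendsto_atTop_of_eq_nextLabel (hmono : ∀ p x, Monotone fun s => W p s x)
    (ha : ∀ n, a n = nextLabel W a n) : Tendsto a atTop atTop := by
  refine tendsto_atTop.2 fun p => ?_
  induction p with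
  | zero => exact .of_forall fun n => Nat.zero_le _
  | succ p ih =>
    have hattention {s : ℕ} (hps : p < s) (hs : a s = p) : NeedsAttention W a s p := by
      rw [← hs, ha s]
      exact needsAttention_nextLabel (by rw [← ha s]; omega)
    obtain ⟨t, ht⟩ := eventually_atTop.1 ih
    suffices h : ∀ᶠ n in atTop, a n ≠ p by
      filter_upwards [ih, h] with n hn hne using hn.lt_of_ne' hne
    by_contra hfreq
    have hfreq : ∃ᶠ n in atTop, a n = p := by simpa [Filter.Frequently] using hfreq
    obtain ⟨s, hs, has⟩ := frequently_atTop'.1 hfreq (max p t)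
    obtain ⟨s', hs', has'⟩ := frequently_atTop'.1 hfreq s
    obtain ⟨x, hxs, hWx, hlt⟩ := (hattention (by omega) has).1
    refine (hattention (by omega) has').2 ⟨x, by omega, hmono p x hs'.le hWx,
      ⟨s, ⟨hxs, hs'⟩, has⟩, ?_⟩
    rintro _ ⟨u, hu, rfl⟩
    rcases lt_or_ge u s with h | h
    · exact (hlt u ⟨hu.1, h⟩).le
    · exact ht u (by omega)

theorem exists_isLeast_image_Ioi_of_eq_nextLabel (hmono : ∀ p x, Monotone fun s => W p s x)
    (ha : ∀ n, a n = nextLabel W a n) (hp : {x | ∃ s, W p s x}.Infinite) :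
    ∃ x, (∃ s, W p s x) ∧ IsLeast (a '' Ioi x) p := by
  obtain ⟨t, ht⟩ := eventually_atTop.1
    ((tendsto_atTop_of_eq_nextLabel hmono ha).eventually_gt_atTop p)
  obtain ⟨x₀, ⟨s₀, hs₀⟩, htx₀⟩ := hp.exists_gt t
  obtain ⟨s, hs⟩ := exists_gt (max s₀ x₀)
  have hmet : IsMet W a s p := by
    by_contra hmet
    have hlt : p < nextLabel W a s := ha s ▸ ht s (by omega)
    refine not_needsAttention_of_lt_nextLabel hlt ⟨⟨x₀, by omega, ?_, ?_⟩, hmet⟩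
    · exact hmono p x₀ (by omega) hs₀
    · exact fun u hu => ht u (htx₀.trans hu.1).le
  obtain ⟨x, -, hWx, ⟨u, hu, hau⟩, hle⟩ := hmet
  refine ⟨x, ⟨s, hWx⟩, ⟨u, hu.1, hau⟩, ?_⟩
  rintro _ ⟨v, hv, rfl⟩
  rcases lt_or_ge v s with h | h
  · exact hle ⟨v, ⟨hv, h⟩, rfl⟩
  · exact (ht v (by omega)).le

end Priority

section Enumeration

/-- The number `x` has been enumerated by stage `s` into the range of the `e`-th partial
recursive function. -/
def EnumeratedBy (e s x : ℕ) : Prop :=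
  ∃ k < s, Code.evaln s (Denumerable.ofNat Code e) k = some x

theorem monotone_enumeratedBy (e x : ℕ) : Monotone fun s => EnumeratedBy e s x := by
  rintro s s' hs ⟨k, hk, he⟩
  exact ⟨k, hk.trans_le hs, Code.evaln_mono hs he⟩

theorem exists_setOf_enumeratedBy_eq_range {g : ℕ → ℕ} (hg : Computable g) :
    ∃ e, {x | ∃ s, EnumeratedBy e s x} = range g := by
  obtain ⟨c, hc⟩ := Code.exists_code.1 (Partrec.nat_iff.1 hg)
  have hmem (k x : ℕ) : (∃ s, x ∈ Code.evaln s c k) ↔ g k = x := by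
    rw [← Code.evaln_complete, hc]
    simp [eq_comm]
  refine ⟨Encodable.encode c, ext fun x => ⟨?_, ?_⟩⟩
  · rintro ⟨s, k, -, hk⟩
    exact ⟨k, (hmem k x).1 ⟨s, by simpa using hk⟩⟩
  · rintro ⟨k, hk⟩
    obtain ⟨s, hs⟩ := (hmem k x).2 hk
    exact ⟨s, k, Code.evaln_bound hs, by simpa using hs⟩

theorem primrecPred_enumeratedBy :
    PrimrecPred fun q : ℕ × ℕ × ℕ => EnumeratedBy q.1 q.2.1 q.2.2 := by
  have heval : PrimrecRel fun (q : ℕ × ℕ × ℕ) k =>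
      Code.evaln q.2.1 (Denumerable.ofNat Code q.1) k = some q.2.2 :=
    Primrec.eq.comp
      (Code.primrec_evaln.comp (.pair (.pair (Primrec.fst.comp (Primrec.snd.comp .fst))
        ((Primrec.ofNat Code).comp (Primrec.fst.comp .fst))) .snd))
      (Primrec.option_some.comp (Primrec.snd.comp (Primrec.snd.comp .fst)))
  exact primrecPred_exists_lt heval (Primrec.fst.comp .snd)

end Enumeration

section ComputableSequences

/-- The set `A` contains a term of every computable injective sequence; in other words, its
complement contains no infinite computably enumerable set. -/
def MeetsComputableSequences (A : Set ℕ) : Prop :=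
  ∀ g : ℕ → ℕ, Computable g → Function.Injective g → ∃ k, g k ∈ A

theorem MeetsComputableSequences.infinite {A : Set ℕ} (hA : MeetsComputableSequences A) :
    A.Infinite := by
  refine infinite_of_forall_exists_gt fun b => ?_
  obtain ⟨k, hk⟩ := hA (fun n => n + (b + 1)) (Primrec.nat_add.comp .id (.const _)).to_comp
    (add_left_injective (b + 1))
  exact ⟨_, hk, by omega⟩

theorem exists_primrec_forall_computable_isLeast {f : ℕ → ℕ} (hf : Primrec f) :
    ∃ a : ℕ → ℕ, Primrec a ∧ ∀ g : ℕ → ℕ, Computable g → Function.Injective g →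
      ∃ e, ∀ p, f p = e → ∃ k, IsLeast (a '' Ioi (g k)) p := by
  obtain ⟨a, ha, hlabel⟩ := exists_primrec_eq_nextLabel (W := fun p => EnumeratedBy (f p))
    (primrecPred_enumeratedBy.comp (.pair (hf.comp .fst) .snd))
  refine ⟨a, ha, fun g hg hinj => ?_⟩
  obtain ⟨e, he⟩ := exists_setOf_enumeratedBy_eq_range hg
  refine ⟨e, ?_⟩
  rintro p rfl
  obtain ⟨x, hx, hleast⟩ := exists_isLeast_image_Ioi_of_eq_nextLabel
    (fun p => monotone_enumeratedBy (f p)) hlabel (he ▸ infinite_range_of_injective hinj)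
  obtain ⟨k, rfl⟩ : x ∈ range g := he ▸ hx
  exact ⟨k, hleast⟩

theorem exists_primrec_meetsComputableSequences_parityOrder : ∃ a : ℕ → ℕ, Primrec a ∧
    MeetsComputableSequences {x | {y | parityOrder a y x = true}.Finite} ∧
    MeetsComputableSequences {x | {y | parityOrder a x y = true}.Finite} := by
  obtain ⟨a, ha, hleast⟩ := exists_primrec_forall_computable_isLeast
    (Primrec.nat_div.comp .id (.const 2))
  refine ⟨a, ha, fun g hg hinj => ?_, fun g hg hinj => ?_⟩
  · obtain ⟨e, he⟩ := hleast g hg hinj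
    obtain ⟨k, hk⟩ := he (2 * e) (by dsimp only [id]; omega)
    exact ⟨k, finite_below_parityOrder_of_even hk (even_two_mul e)⟩
  · obtain ⟨e, he⟩ := hleast g hg hinj
    obtain ⟨k, hk⟩ := he (2 * e + 1) (by dsimp only [id]; omega)
    exact ⟨k, finite_above_parityOrder_of_odd hk (odd_two_mul_add_one e)⟩

theorem infinite_setOf_rel_of_forall_rel_succ {α : Type*} {r : α → α → Prop} [IsTrans α r]
    {g : ℕ → α} (hg : Function.Injective g) (h : ∀ n, r (g n) (g (n + 1))) (k : ℕ) :
    {y | r (g k) y}.Infinite :=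
  infinite_of_injective_forall_mem (hg.comp (add_left_injective (k + 1)))
    fun n => Nat.rel_of_forall_rel_succ_of_lt r h (Nat.lt_add_left n k.lt_succ_self)

theorem MeetsComputableSequences.not_forall_rel_succ {r : ℕ → ℕ → Prop} [IsTrans ℕ r]
    (hr : MeetsComputableSequences {x | {y | r x y}.Finite}) {g : ℕ → ℕ} (hg : Computable g)
    (hinj : Function.Injective g) : ¬ ∀ n, r (g n) (g (n + 1)) := fun h =>
  have ⟨k, hk⟩ := hr g hg hinj
  infinite_setOf_rel_of_forall_rel_succ hinj h k hk

theorem not_exists_computable_monotone_of_trans {r : ℕ → ℕ → Bool}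
    (htrans : ∀ x y z, r x y = true → r y z = true → r x z = true)
    (hbelow : MeetsComputableSequences {x | {y | r y x = true}.Finite})
    (habove : MeetsComputableSequences {x | {y | r x y = true}.Finite}) :
    ¬ ∃ g : ℕ → ℕ, Computable g ∧ StrictMono g ∧
      ((∀ n, r (g n) (g (n + 1)) = true) ∨ (∀ n, r (g (n + 1)) (g n) = true)) := by
  have : IsTrans ℕ fun x y => r x y = true := ⟨htrans⟩
  have : IsTrans ℕ fun x y => r y x = true := ⟨fun x y z hxy hyz => htrans z y x hyz hxy⟩
  rintro ⟨g, hg, hmono, hasc | hdesc⟩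
  · exact habove.not_forall_rel_succ hg hmono.injective hasc
  · exact hbelow.not_forall_rel_succ (r := fun x y => r y x = true) hg hmono.injective hdesc

end ComputableSequences

/-- There is a computable linear order of type `ω + ω*` avoiding 1302 and 2031, with no
computable infinite monotonous sequence. -/
theorem exists_order_avoiding_1302_2031_no_computable_monotone :
    ∃ r : ℕ → ℕ → Bool, Computable₂ r ∧ IsLinearRel r ∧ OrderTypeOmegaPlusOmegaStar r ∧
      ¬ LRealizes r [1, 3, 0, 2] ∧ ¬ LRealizes r [2, 0, 3, 1] ∧
      ¬ ∃ g : ℕ → ℕ, Computable g ∧ StrictMono g ∧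
        ((∀ n, r (g n) (g (n + 1)) = true) ∨ (∀ n, r (g (n + 1)) (g n) = true)) := by
  obtain ⟨a, ha, hbelow, habove⟩ := exists_primrec_meetsComputableSequences_parityOrder
  have hlinear : IsLinearRel (parityOrder a) := isLinearRel_parityOrder a
  exact ⟨parityOrder a, (primrec_parityOrder ha).to_comp, hlinear,
    ⟨finite_below_or_above_parityOrder a, hbelow.infinite, habove.infinite⟩,
    not_lRealizes_parityOrder a (by decide) (by decide) (by decide),
    not_lRealizes_parityOrder a (by decide) (by decide) (by decide),
    not_exists_computable_monotone_of_trans hlinear.2.1 hbelow habove⟩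
end
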